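/- Let M and N be matroids with collections S_M ⊆ 2^{E(M)} and S_N ⊆ 2^{E(N)} such that S_M covers M and S_N covers N. For each a ∈ E(M) fix b_a ∈ S•(M) with p_{b_a} = a. Then the assignment w_{ax} ↦ Σ_{t ∈ S•(N), p_t = x} u_{b_a t} induces a well-defined unital ℂ-algebra homomorphism φ : 𝔖(E(M), E(N)) → 𝔄•(M,N,S), and φ is independent of the choices of the b_a. -/

import Mathlib

open scoped BigOperators TensorProduct

namespace MatroidGame

/-- A "pre-matroid": a finite ground set together with a distinguished collection of
finsets (intended to be the bases). -/
structure PreMatroid (α : Type*) where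
  E : Finset α
  bases : Finset (Finset α)

namespace PreMatroid

variable {α : Type*} [DecidableEq α]

/-- The paper's definition of a matroid: a nonempty collection of `r`-element subsets of the
ground set satisfying the basis exchange axiom. -/
def IsMatroid (M : PreMatroid α) : Prop :=
  M.bases.Nonempty ∧
    (∀ B ∈ M.bases, B ⊆ M.E) ∧
    (∀ B₁ ∈ M.bases, ∀ B₂ ∈ M.bases, B₁.card = B₂.card) ∧
    (∀ B₁ ∈ M.bases, ∀ B₂ ∈ M.bases, ∀ a ∈ B₁ \ B₂,
      ∃ b ∈ B₂ \ B₁, insert b (B₁.erase a) ∈ M.bases)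

/-- A set is independent if it is contained in a basis. -/
def Indep (M : PreMatroid α) (I : Finset α) : Prop :=
  ∃ B ∈ M.bases, I ⊆ B

instance (M : PreMatroid α) : DecidablePred M.Indep := fun I =>
  inferInstanceAs (Decidable (∃ B ∈ M.bases, I ⊆ B))

/-- The rank of a subset: the maximal size of an independent subset of it. -/
def rkSet (M : PreMatroid α) (X : Finset α) : ℕ :=
  (X.powerset.filter fun I => M.Indep I).sup Finset.card

/-- The rank of the matroid. -/
def rk (M : PreMatroid α) : ℕ := M.rkSet M.E

/-- A circuit is a minimal dependent subset of the ground set. -/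
def Circuit (M : PreMatroid α) (C : Finset α) : Prop :=
  C ⊆ M.E ∧ ¬M.Indep C ∧ ∀ D ⊂ C, M.Indep D

/-- A matroid is paving if every circuit has size at least the rank. -/
def Paving (M : PreMatroid α) : Prop := ∀ C, M.Circuit C → M.rk ≤ C.card

/-- The dual matroid: bases are complements of bases. -/
def dual (M : PreMatroid α) : PreMatroid α := ⟨M.E, M.bases.image fun B => M.E \ B⟩

/-- A matroid is sparse paving if both it and its dual are paving. -/
def SparsePaving (M : PreMatroid α) : Prop := M.Paving ∧ M.dual.Paving

/-- The closure of a set. -/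
def cl (M : PreMatroid α) (X : Finset α) : Finset α :=
  M.E.filter fun b => M.rkSet (insert b X) = M.rkSet X

/-- A flat is a closed subset. -/
def IsFlat (M : PreMatroid α) (F : Finset α) : Prop := F ⊆ M.E ∧ M.cl F = F

/-- A hyperplane is a flat of rank `rk M - 1`. -/
def IsHyperplane (M : PreMatroid α) (H : Finset α) : Prop :=
  M.IsFlat H ∧ M.rkSet H = M.rk - 1

/-- A cyclic hyperplane is a hyperplane which is a union of circuits. -/
def IsCyclicHyperplane (M : PreMatroid α) (H : Finset α) : Prop :=
  M.IsHyperplane H ∧ ∀ x ∈ H, ∃ C, M.Circuit C ∧ C ⊆ H ∧ x ∈ C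

/-- A loop is a ground set element contained in no basis. -/
def IsLoop (M : PreMatroid α) (a : α) : Prop := a ∈ M.E ∧ ∀ B ∈ M.bases, a ∉ B

/-- A coloop is a ground set element contained in every basis. -/
def IsColoop (M : PreMatroid α) (a : α) : Prop := a ∈ M.E ∧ ∀ B ∈ M.bases, a ∈ B

def Loopless (M : PreMatroid α) : Prop := ∀ a, ¬M.IsLoop a

/-- A matroid is simple if it has no loops and every rank-1 subset is a singleton. -/
def Simple (M : PreMatroid α) : Prop :=
  M.Loopless ∧ ∀ X ⊆ M.E, M.rkSet X = 1 → X.card = 1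

/-- The restriction `M | Y`: its independent sets are the independent sets of `M` contained
in `Y`, and its bases are the maximal such sets. -/
def restrict (M : PreMatroid α) (Y : Finset α) : PreMatroid α :=
  ⟨Y, Y.powerset.filter fun B =>
      M.Indep B ∧ ∀ I ∈ Y.powerset, M.Indep I → B ⊆ I → I = B⟩

/-- `M` is the free extension of `N` by the new element `e`. -/
def IsFreeExtension (M N : PreMatroid α) (e : α) : Prop :=
  e ∉ N.E ∧ M.E = insert e N.E ∧
    ∀ B : Finset α, B ∈ M.bases ↔
      (B ∈ N.bases ∨ ∃ A : Finset α, N.Indep A ∧ A.card = N.rk - 1 ∧ B = insert e A)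

/-- The uniform matroid of rank `k` on the ground set `E`. -/
def uniform {β : Type*} (E : Finset β) (k : ℕ) : PreMatroid β := ⟨E, E.powersetCard k⟩

/-- The direct sum of two matroids. -/
def directSum {β γ : Type*} [DecidableEq β] [DecidableEq γ] (M : PreMatroid β)
    (N : PreMatroid γ) : PreMatroid (β ⊕ γ) :=
  ⟨M.E.map ⟨Sum.inl, Sum.inl_injective⟩ ∪ N.E.map ⟨Sum.inr, Sum.inr_injective⟩,
    (M.bases ×ˢ N.bases).image fun p =>
      p.1.map ⟨Sum.inl, Sum.inl_injective⟩ ∪ p.2.map ⟨Sum.inr, Sum.inr_injective⟩⟩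

/-- `φ` realizes an isomorphism of matroids: it is a bijection of the ground sets such that a
subset of the ground set is a basis iff its image is a basis. -/
def IsIsoMap {β γ : Type*} [DecidableEq γ] (M : PreMatroid β) (N : PreMatroid γ)
    (φ : β → γ) : Prop :=
  Set.BijOn φ ↑M.E ↑N.E ∧ ∀ B ⊆ M.E, (B ∈ M.bases ↔ B.image φ ∈ N.bases)

/-- Two matroids are isomorphic. -/
def Iso {β γ : Type*} [DecidableEq γ] (M : PreMatroid β) (N : PreMatroid γ) : Prop :=
  ∃ φ : β → γ, M.IsIsoMap N φ

end PreMatroid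

/-- The pointed sets `S•`: pairs `(A, p)` with `A ∈ S` and `p ∈ A`. -/
abbrev PtSet {α : Type*} (S : Finset (Finset α)) : Type _ :=
  {v : Finset α × α // v.1 ∈ S ∧ v.2 ∈ v.1}

/-- The relation `rel` on pointed sets, valued in `{0,1,2,3}`. -/
def relNum {α : Type*} [DecidableEq α] (a b : Finset α × α) : ℕ :=
  if a.1 = b.1 then (if a.2 = b.2 then 0 else 2) else (if a.2 = b.2 then 1 else 3)

/-- `S` covers the ground set `E` if every element of `E` lies in a member of `S`. -/
def Covers {α : Type*} (S : Finset (Finset α)) (E : Finset α) : Prop :=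
  ∀ a ∈ E, ∃ A ∈ S, a ∈ A

noncomputable section

/-- The defining relations of the quantum isomorphism (magic unitary) algebra `𝔖(I,J)`. -/
inductive MagicRel (I J : Type*) [Fintype I] [Fintype J] :
    FreeAlgebra ℂ (I × J) → FreeAlgebra ℂ (I × J) → Prop
  | idem (a : I) (x : J) :
      MagicRel I J (FreeAlgebra.ι ℂ (a, x) * FreeAlgebra.ι ℂ (a, x)) (FreeAlgebra.ι ℂ (a, x))
  | row (a : I) {x y : J} (h : x ≠ y) :
      MagicRel I J (FreeAlgebra.ι ℂ (a, x) * FreeAlgebra.ι ℂ (a, y)) 0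
  | col {a b : I} (x : J) (h : a ≠ b) :
      MagicRel I J (FreeAlgebra.ι ℂ (a, x) * FreeAlgebra.ι ℂ (b, x)) 0
  | rowSum (a : I) : MagicRel I J (∑ x : J, FreeAlgebra.ι ℂ (a, x)) 1
  | colSum (x : J) : MagicRel I J (∑ a : I, FreeAlgebra.ι ℂ (a, x)) 1

/-- The quantum isomorphism algebra `𝔖(I,J)`. -/
abbrev MagicAlgebra (I J : Type*) [Fintype I] [Fintype J] := RingQuot (MagicRel I J)

/-- The generator `u_{a x}` of `𝔖(I,J)`. -/
def magicGen (I J : Type*) [Fintype I] [Fintype J] (a : I) (x : J) : MagicAlgebra I J :=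
  RingQuot.mkAlgHom ℂ (MagicRel I J) (FreeAlgebra.ι ℂ (a, x))

/-- The defining relations of the isomorphism algebra: magic unitary relations together with
`u_{a x} u_{b y} = 0` whenever `rel(a,b) ≠ rel(x,y)`. -/
inductive IsoRel (I J : Type*) [Fintype I] [Fintype J] (rI : I → I → ℕ) (rJ : J → J → ℕ) :
    FreeAlgebra ℂ (I × J) → FreeAlgebra ℂ (I × J) → Prop
  | magic {u v : FreeAlgebra ℂ (I × J)} : MagicRel I J u v → IsoRel I J rI rJ u v
  | mismatch (a b : I) (x y : J) (h : rI a b ≠ rJ x y) :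
      IsoRel I J rI rJ (FreeAlgebra.ι ℂ (a, x) * FreeAlgebra.ι ℂ (b, y)) 0

/-- The generic isomorphism algebra for two relation-valued structures. -/
abbrev IsoAlgebra (I J : Type*) [Fintype I] [Fintype J] (rI : I → I → ℕ)
    (rJ : J → J → ℕ) :=
  RingQuot (IsoRel I J rI rJ)

/-- The generator `u_{a x}` of the isomorphism algebra. -/
def isoGen (I J : Type*) [Fintype I] [Fintype J] (rI : I → I → ℕ) (rJ : J → J → ℕ)
    (a : I) (x : J) : IsoAlgebra I J rI rJ :=
  RingQuot.mkAlgHom ℂ (IsoRel I J rI rJ) (FreeAlgebra.ι ℂ (a, x))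

/-- `rel` as a function on pointed sets. -/
abbrev ptRel {α : Type*} [DecidableEq α] (S : Finset (Finset α)) : PtSet S → PtSet S → ℕ :=
  fun a b => relNum a.val b.val

/-- The isomorphism `∗`-algebra `𝔄•(M,N,S)` associated to the matroid isomorphism game,
presented by magic unitary relations on pointed sets plus the `rel` mismatch relations. -/
abbrev MatIsoAlgebra {α β : Type*} [Fintype α] [Fintype β] [DecidableEq α] [DecidableEq β]
    (S_M : Finset (Finset α)) (S_N : Finset (Finset β)) :=
  IsoAlgebra (PtSet S_M) (PtSet S_N) (ptRel S_M) (ptRel S_N)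

/-- The generator `u_{𝔞 𝔵}` of `𝔄•(M,N,S)`. -/
def matGen {α β : Type*} [Fintype α] [Fintype β] [DecidableEq α] [DecidableEq β]
    (S_M : Finset (Finset α)) (S_N : Finset (Finset β)) (a : PtSet S_M) (x : PtSet S_N) :
    MatIsoAlgebra S_M S_N :=
  isoGen (PtSet S_M) (PtSet S_N) (ptRel S_M) (ptRel S_N) a x

end


open PreMatroid

/-!
For pointed sets `b` over `a` and `t` over `x`, the mismatch relations collapse the product of
`∑_{p_s = x} u_{b s}` with `1 = ∑_c u_{c t}`, and likewise that of `1 = ∑_s u_{b s}` with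
`∑_{p_c = a} u_{c t}`, to the product of the two fibre sums. Hence

  `∑_{p_s = x} u_{b s} = ∑_{p_c = a} u_{c t}`,

so the left side depends on `b` only through `a`. The resulting matrix has for rows the rows of
`u` summed over fibres and for columns the columns of `u` summed over fibres, so each of them is
again a complete family of orthogonal idempotents.
-/

section FiberSum

variable {I K A : Type*} [Fintype I] [DecidableEq K] [Semiring A]

/-- The sum `∑_{p i = k} e i` of a finite family over the fibre of `p` above `k`. With `p` the map
`(A, p) ↦ p` on pointed sets and `e` a row of the generators of `𝔄•(M,N,S)`, these are the images
of the generators `w_{ax}`. -/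
def fiberSum (p : I → K) (e : I → A) (k : K) : A :=
  ∑ i with p i = k, e i

theorem completeOrthogonalIdempotents_fiberSum [Fintype K] {e : I → A}
    (he : CompleteOrthogonalIdempotents e) (p : I → K) :
    CompleteOrthogonalIdempotents (fiberSum p e) := by
  refine CompleteOrthogonalIdempotents.iff_ortho_complete.2 ⟨fun k l hkl ↦ ?_, ?_⟩
  · simp only [fiberSum, Finset.sum_mul_sum]
    refine Finset.sum_eq_zero fun i hi ↦ Finset.sum_eq_zero fun j hj ↦ he.ortho ?_
    rintro rfl
    exact hkl ((Finset.mem_filter.1 hi).2.symm.trans (Finset.mem_filter.1 hj).2)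
  · exact (Finset.sum_fiberwise _ p e).trans he.complete

end FiberSum

/-- A magic matrix: every row and every column is a complete family of orthogonal idempotents.
These are the relations imposed on the generators of `𝔖(I,J)`; no `∗`-structure is assumed. -/
structure IsMagic {I J A : Type*} [Fintype I] [Fintype J] [Semiring A] (u : I → J → A) :
    Prop where
  row (a : I) : CompleteOrthogonalIdempotents (u a)
  col (x : J) : CompleteOrthogonalIdempotents (u · x)

section Lift

variable {I J A : Type*} [Fintype I] [Fintype J] [Semiring A] [Algebra ℂ A] {u : I → J → A}

theorem IsMagic.lift_eq_of_magicRel (hu : IsMagic u) ⦃v w : FreeAlgebra ℂ (I × J)⦄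
    (h : MagicRel I J v w) :
    FreeAlgebra.lift ℂ (Function.uncurry u) v = FreeAlgebra.lift ℂ (Function.uncurry u) w := by
  cases h with
  | idem a x => simpa using ((hu.row a).idem x).eq
  | row a hxy => simpa using (hu.row a).ortho hxy
  | col x hab => simpa using (hu.col x).ortho hab
  | rowSum a => simpa using (hu.row a).complete
  | colSum x => simpa using (hu.col x).complete

/-- The universal property of `𝔖(I,J)`: a magic matrix `u` induces the homomorphism sending the
generators to the entries of `u`. -/
noncomputable def IsMagic.lift (hu : IsMagic u) : MagicAlgebra I J →ₐ[ℂ] A :=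
  RingQuot.liftAlgHom ℂ ⟨FreeAlgebra.lift ℂ (Function.uncurry u), hu.lift_eq_of_magicRel⟩

theorem IsMagic.lift_magicGen (hu : IsMagic u) (a : I) (x : J) :
    hu.lift (magicGen I J a x) = u a x := by
  rw [lift, magicGen, RingQuot.liftAlgHom_mkAlgHom_apply, FreeAlgebra.lift_ι_apply,
    Function.uncurry_apply_pair]

end Lift

section Contraction

variable {I J K L A : Type*} [Semiring A] {p : I → K} {q : J → L} {u : I → J → A}

/-- The matrix `u` respects the fibres of `p` and `q` if `u a x * u b y` vanishes whenever exactly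
one of `p a = p b` and `q x = q y` holds. This is what remains of the relations
`rel_M(a,b) ≠ rel_N(x,y) → u_{ax} u_{by} = 0` when only the points are compared. -/
def RespectsFibers (p : I → K) (q : J → L) (u : I → J → A) : Prop :=
  ∀ ⦃a b x y⦄, ¬(p a = p b ↔ q x = q y) → u a x * u b y = 0

theorem RespectsFibers.mul_fiberSum_col [Fintype I] [DecidableEq K] (h : RespectsFibers p q u)
    {a : I} {x y : J} (hcol : ∑ c, u c y = 1) (hxy : q x = q y) :
    u a x * fiberSum p (u · y) (p a) = u a x := by
  calc u a x * fiberSum p (u · y) (p a)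
    _ = ∑ c with p c = p a, u a x * u c y := Finset.mul_sum ..
    _ = ∑ c, u a x * u c y := Finset.sum_filter_of_ne fun c _ hc ↦ by
      by_contra hca
      exact hc (h fun e ↦ hca (e.2 hxy).symm)
    _ = u a x := by rw [← Finset.mul_sum, hcol, mul_one]

theorem RespectsFibers.fiberSum_row_mul [Fintype J] [DecidableEq L] (h : RespectsFibers p q u)
    {a b : I} {y : J} (hrow : ∑ x, u a x = 1) (hab : p a = p b) :
    fiberSum q (u a) (q y) * u b y = u b y := by
  calc fiberSum q (u a) (q y) * u b y
    _ = ∑ x with q x = q y, u a x * u b y := Finset.sum_mul ..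
    _ = ∑ x, u a x * u b y := Finset.sum_filter_of_ne fun x _ hx ↦ by
      by_contra hxy
      exact hx (h fun e ↦ hxy (e.1 hab))
    _ = u b y := by rw [← Finset.sum_mul, hrow, one_mul]

variable [Fintype I] [Fintype J] [DecidableEq L]

theorem RespectsFibers.fiberSum_row_eq_fiberSum_col [DecidableEq K]
    (h : RespectsFibers p q u) {a : I} {x : J} (hrow : ∑ y, u a y = 1)
    (hcol : ∑ b, u b x = 1) :
    fiberSum q (u a) (q x) = fiberSum p (u · x) (p a) := by
  calc fiberSum q (u a) (q x)
    _ = ∑ y with q y = q x, u a y * fiberSum p (u · x) (p a) :=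
      Finset.sum_congr rfl fun _ hy ↦
        (h.mul_fiberSum_col hcol (Finset.mem_filter.1 hy).2).symm
    _ = fiberSum q (u a) (q x) * fiberSum p (u · x) (p a) := (Finset.sum_mul ..).symm
    _ = ∑ b with p b = p a, fiberSum q (u a) (q x) * u b x := Finset.mul_sum ..
    _ = fiberSum p (u · x) (p a) :=
      Finset.sum_congr rfl fun _ hb ↦
        h.fiberSum_row_mul hrow (Finset.mem_filter.1 hb).2.symm

theorem IsMagic.fiberSum_row_congr (hu : IsMagic u) (h : RespectsFibers p q u)
    (hq : q.Surjective) {a b : I} (hab : p a = p b) :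
    fiberSum q (u a) = fiberSum q (u b) := by
  classical
  funext l
  obtain ⟨x, rfl⟩ := hq l
  rw [h.fiberSum_row_eq_fiberSum_col (hu.row a).complete (hu.col x).complete, hab,
    h.fiberSum_row_eq_fiberSum_col (hu.row b).complete (hu.col x).complete]

theorem IsMagic.fiberSum_row [Fintype K] [Fintype L] (hu : IsMagic u)
    (h : RespectsFibers p q u) (hq : q.Surjective) {σ : K → I}
    (hσ : Function.RightInverse σ p) :
    IsMagic fun k ↦ fiberSum q (u (σ k)) where
  row k := completeOrthogonalIdempotents_fiberSum (hu.row (σ k)) q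
  col l := by
    classical
    obtain ⟨x, rfl⟩ := hq l
    have col_eq : (fun k ↦ fiberSum q (u (σ k)) (q x)) = fiberSum p (u · x) := by
      funext k
      rw [h.fiberSum_row_eq_fiberSum_col (hu.row (σ k)).complete (hu.col x).complete, hσ k]
    rw [col_eq]
    exact completeOrthogonalIdempotents_fiberSum (hu.col x) p

theorem IsMagic.exists_algHom_magicGen_eq_fiberSum [Fintype K] [Fintype L] [Algebra ℂ A]
    (hu : IsMagic u) (h : RespectsFibers p q u) (hp : p.Surjective) (hq : q.Surjective) :
    ∃ φ : MagicAlgebra K L →ₐ[ℂ] A,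
      ∀ a l, φ (magicGen K L (p a) l) = fiberSum q (u a) l := by
  obtain ⟨σ, hσ⟩ := hp.hasRightInverse
  refine ⟨(hu.fiberSum_row h hq hσ).lift, fun a l ↦ ?_⟩
  rw [lift_magicGen, hu.fiberSum_row_congr h hq (hσ (p a))]

end Contraction

section IsoAlgebra

variable {I J : Type*} [Fintype I] [Fintype J] {rI : I → I → ℕ} {rJ : J → J → ℕ}

theorem isMagic_isoGen : IsMagic (isoGen I J rI rJ) := by
  have map_rel {v w : FreeAlgebra ℂ (I × J)} (h : MagicRel I J v w) :
      RingQuot.mkAlgHom ℂ (IsoRel I J rI rJ) v = RingQuot.mkAlgHom ℂ (IsoRel I J rI rJ) w :=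
    RingQuot.mkAlgHom_rel ℂ (.magic h)
  exact
    { row a :=
        { idem x := by simpa [isoGen, IsIdempotentElem] using map_rel (.idem a x)
          ortho x y hxy := by simpa [isoGen] using map_rel (.row a hxy)
          complete := by simpa [isoGen] using map_rel (.rowSum a) }
      col x :=
        { idem a := by simpa [isoGen, IsIdempotentElem] using map_rel (.idem a x)
          ortho a b hab := by simpa [isoGen] using map_rel (.col x hab)
          complete := by simpa [isoGen] using map_rel (.colSum x) } }

theorem respectsFibers_isoGen {K L : Type*} {p : I → K} {q : J → L}
    (h : ∀ a b x y, rI a b = rJ x y → (p a = p b ↔ q x = q y)) :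
    RespectsFibers p q (isoGen I J rI rJ) := fun a b x y hne ↦ by
  have hr : rI a b ≠ rJ x y := fun e ↦ hne (h a b x y e)
  simpa [isoGen] using RingQuot.mkAlgHom_rel ℂ (IsoRel.mismatch a b x y hr)

end IsoAlgebra

section PointedSets

variable {α : Type*} {S : Finset (Finset α)} {E : Finset α}

theorem relNum_le_one_iff [DecidableEq α] (a b : Finset α × α) : relNum a b ≤ 1 ↔ a.2 = b.2 := by
  unfold relNum
  split_ifs <;> simp_all

/-- The point `p_a` of a pointed set, as an element of a ground set containing the members of
`S`. -/
def PtSet.point (hS : ∀ A ∈ S, A ⊆ E) (a : PtSet S) : {a // a ∈ E} :=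
  ⟨a.val.2, hS _ a.2.1 a.2.2⟩

theorem PtSet.point_surjective (hS : ∀ A ∈ S, A ⊆ E) (hcov : Covers S E) :
    (PtSet.point hS).Surjective := fun ⟨a, ha⟩ ↦
  let ⟨A, hA, haA⟩ := hcov a ha
  ⟨⟨(A, a), hA, haA⟩, rfl⟩

end PointedSets

section MatroidAlgebra

variable {α β : Type*} [Fintype α] [Fintype β] [DecidableEq α] [DecidableEq β]
  {S_M : Finset (Finset α)} {S_N : Finset (Finset β)} {E : Finset α} {F : Finset β}

theorem respectsFibers_matGen (hSM : ∀ A ∈ S_M, A ⊆ E) (hSN : ∀ A ∈ S_N, A ⊆ F) :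
    RespectsFibers (PtSet.point hSM) (PtSet.point hSN) (matGen S_M S_N) :=
  respectsFibers_isoGen fun a b x y h ↦ by
    simp only [PtSet.point, Subtype.mk.injEq, ← relNum_le_one_iff]
    exact iff_of_eq (congrArg (· ≤ 1) h)

theorem stmt15_general (hSM : ∀ A ∈ S_M, A ⊆ E) (hSN : ∀ A ∈ S_N, A ⊆ F)
    (hcovM : Covers S_M E) (hcovN : Covers S_N F) :
    ∃ φ : MagicAlgebra {a // a ∈ E} {x // x ∈ F} →ₐ[ℂ] MatIsoAlgebra S_M S_N,
      ∀ (b : {a // a ∈ E} → PtSet S_M), (∀ a, (b a).val.2 = a.val) →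
        ∀ (a : {a // a ∈ E}) (x : {x // x ∈ F}),
          φ (magicGen {a // a ∈ E} {x // x ∈ F} a x) =
            ∑ t ∈ Finset.univ.filter (fun t : PtSet S_N => t.val.2 = x.val),
              matGen S_M S_N (b a) t := by
  have hu : IsMagic (matGen S_M S_N) := isMagic_isoGen
  obtain ⟨φ, hφ⟩ := hu.exists_algHom_magicGen_eq_fiberSum
    (respectsFibers_matGen hSM hSN) (PtSet.point_surjective hSM hcovM)
    (PtSet.point_surjective hSN hcovN)
  refine ⟨φ, fun b hb a x ↦ ?_⟩
  have point_b : PtSet.point hSM (b a) = a := Subtype.ext (hb a)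
  have hφ_b := hφ (b a) x
  rw [point_b] at hφ_b
  simpa only [fiberSum, PtSet.point, Subtype.ext_iff] using hφ_b

end MatroidAlgebra

theorem stmt15 {α β : Type*} [Fintype α] [Fintype β] [DecidableEq α] [DecidableEq β]
    (M : PreMatroid α) (N : PreMatroid β) (hM : M.IsMatroid) (hN : N.IsMatroid)
    (S_M : Finset (Finset α)) (S_N : Finset (Finset β))
    (hSM : ∀ A ∈ S_M, A ⊆ M.E) (hSN : ∀ A ∈ S_N, A ⊆ N.E)
    (hcovM : Covers S_M M.E) (hcovN : Covers S_N N.E) :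
    ∃ φ : MagicAlgebra {a // a ∈ M.E} {x // x ∈ N.E} →ₐ[ℂ] MatIsoAlgebra S_M S_N,
      ∀ (b : {a // a ∈ M.E} → PtSet S_M), (∀ a, (b a).val.2 = a.val) →
        ∀ (a : {a // a ∈ M.E}) (x : {x // x ∈ N.E}),
          φ (magicGen {a // a ∈ M.E} {x // x ∈ N.E} a x) =
            ∑ t ∈ Finset.univ.filter (fun t : PtSet S_N => t.val.2 = x.val),
              matGen S_M S_N (b a) t :=
  stmt15_general hSM hSN hcovM hcovN

end MatroidGame
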